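/- (Quasi-Mean Value Theorem) Let f : ℝ → ℝ be continuous on [a, b] (a < b) and specularly differentiable at every point of (a, b). Then there exist c₁, c₂ ∈ (a, b) such that f^S(c₂) ≤ (f(b) − f(a))/(b − a) ≤ f^S(c₁). -/

import Mathlib

open Filter Topology Set

/-- The combination function `A(α,β)` from the paper: the slope of the specular
tangent determined by one-sided slopes `α` (right) and `β` (left). -/
noncomputable def specA (α β : ℝ) : ℝ :=
  if α + β = 0 then 0
  else (α * β - 1 + Real.sqrt ((α ^ 2 + 1) * (β ^ 2 + 1))) / (α + β)

/-- `HasSpecData f x₀ L α β` means: the left and right limits of `f` at `x₀` both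
exist and are equal to `L`, the right specular derivative of `f` at `x₀` is `α`,
and the left specular derivative of `f` at `x₀` is `β`. -/
def HasSpecData (f : ℝ → ℝ) (x₀ L α β : ℝ) : Prop :=
  Tendsto f (𝓝[<] x₀) (𝓝 L) ∧ Tendsto f (𝓝[>] x₀) (𝓝 L) ∧
    Tendsto (fun x => (f x - L) / (x - x₀)) (𝓝[>] x₀) (𝓝 α) ∧
    Tendsto (fun x => (f x - L) / (x - x₀)) (𝓝[<] x₀) (𝓝 β)

/-- `f` is specularly differentiable at `x₀`. -/
def SpecDifferentiableAt (f : ℝ → ℝ) (x₀ : ℝ) : Prop :=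
  ∃ L α β, HasSpecData f x₀ L α β

/-- `f` is specularly differentiable at `x₀` with specular derivative `d`. -/
def HasSpecDerivAt (f : ℝ → ℝ) (x₀ d : ℝ) : Prop :=
  ∃ L α β, HasSpecData f x₀ L α β ∧ d = specA α β

/-! The specular derivative is the slope of the bisector of the two one-sided tangents, that is,
`A(α, β) = tan ((arctan α + arctan β) / 2)`, so it lies between the one-sided slopes. It therefore
suffices to find a point where both one-sided slopes are at least the slope `m` of the chord; the
other inequality follows by passing to `-f`. The function `g x = f x - m * x` has `g a = g b`. If
`g x < g y` for some `x < y`, take a level `k` strictly between these values and the infimum `c` of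
the points of `[x, y]` at which `g` exceeds `k`: then `g ≤ k = g c` just before `c`, while `g > k`
at points arbitrarily close after `c`. Otherwise `g` is constant and any point will do. -/

section SpecularSlope

theorem tan_half_eq_one_sub_cos_div_sin (x : ℝ) :
    Real.tan (x / 2) = (1 - Real.cos x) / Real.sin x := by
  obtain ⟨y, rfl⟩ : ∃ y, x = 2 * y := ⟨x / 2, by ring⟩
  have hcos : 1 - Real.cos (2 * y) = 2 * Real.sin y * Real.sin y := by
    rw [Real.cos_two_mul, Real.cos_sq']
    ring
  rw [mul_div_cancel_left₀ y two_ne_zero, hcos, Real.sin_two_mul, Real.tan_eq_sin_div_cos]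
  by_cases hsin : Real.sin y = 0
  · simp [hsin]
  · rw [mul_div_mul_left _ _ (mul_ne_zero two_ne_zero hsin)]

theorem specA_eq_tan (α β : ℝ) :
    specA α β = Real.tan ((Real.arctan α + Real.arctan β) / 2) := by
  unfold specA
  split_ifs with h
  · simp [eq_neg_of_add_eq_zero_left h]
  have hsqrt : √((α ^ 2 + 1) * (β ^ 2 + 1)) = √(1 + α ^ 2) * √(1 + β ^ 2) := by
    rw [Real.sqrt_mul (by positivity), add_comm, add_comm (β ^ 2)]
  have hα : √(1 + α ^ 2) ≠ 0 := by positivity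
  have hβ : √(1 + β ^ 2) ≠ 0 := by positivity
  rw [tan_half_eq_one_sub_cos_div_sin, Real.cos_add, Real.sin_add, Real.cos_arctan,
    Real.cos_arctan, Real.sin_arctan, Real.sin_arctan, hsqrt]
  field_simp
  ring

theorem specA_neg (α β : ℝ) : specA (-α) (-β) = -specA α β := by
  rw [specA_eq_tan, specA_eq_tan, Real.arctan_neg, Real.arctan_neg, ← neg_add, neg_div,
    Real.tan_neg]

theorem le_specA {m α β : ℝ} (hα : m ≤ α) (hβ : m ≤ β) : m ≤ specA α β := by
  have hmα := Real.arctan_strictMono.monotone hα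
  have hmβ := Real.arctan_strictMono.monotone hβ
  have hmid : (Real.arctan α + Real.arctan β) / 2 ∈ Ioo (-(Real.pi / 2)) (Real.pi / 2) := by
    constructor <;> linarith [Real.neg_pi_div_two_lt_arctan m, Real.arctan_lt_pi_div_two α,
      Real.arctan_lt_pi_div_two β]
  calc m = Real.tan (Real.arctan m) := (Real.tan_arctan m).symm
    _ ≤ Real.tan ((Real.arctan α + Real.arctan β) / 2) :=
      Real.strictMonoOn_tan.monotoneOn (Real.arctan_mem_Ioo m) hmid (by linarith)
    _ = specA α β := (specA_eq_tan α β).symm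

theorem specA_le {m α β : ℝ} (hα : α ≤ m) (hβ : β ≤ m) : specA α β ≤ m := by
  rw [← neg_le_neg_iff, ← specA_neg]
  exact le_specA (neg_le_neg hα) (neg_le_neg hβ)

end SpecularSlope

namespace HasSpecData

variable {f : ℝ → ℝ} {c L m α β : ℝ}

theorem neg (h : HasSpecData f c L α β) : HasSpecData (-f) c (-L) (-α) (-β) := by
  obtain ⟨hleft, hright, hα, hβ⟩ := h
  refine ⟨hleft.neg, hright.neg, hα.neg.congr fun x => ?_, hβ.neg.congr fun x => ?_⟩ <;>
  · rw [Pi.neg_apply]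
    ring

theorem eq_of_continuousAt (h : HasSpecData f c L α β) (hf : ContinuousAt f c) : L = f c :=
  tendsto_nhds_unique h.1 (hf.mono_left nhdsWithin_le_nhds)

theorem le_right (h : HasSpecData f c L α β)
    (hf : ∃ᶠ x in 𝓝[>] c, m * (x - c) ≤ f x - L) : m ≤ α := by
  refine ge_of_tendsto_of_frequently h.2.2.1 ?_
  refine (hf.and_eventually self_mem_nhdsWithin).mono fun x hx => ?_
  exact (le_div_iff₀ (sub_pos.2 hx.2)).2 hx.1

theorem le_left (h : HasSpecData f c L α β)
    (hf : ∃ᶠ x in 𝓝[<] c, f x - L ≤ m * (x - c)) : m ≤ β := by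
  refine ge_of_tendsto_of_frequently h.2.2.2 ?_
  refine (hf.and_eventually self_mem_nhdsWithin).mono fun x hx => ?_
  exact (le_div_iff_of_neg (sub_neg.2 hx.2)).2 hx.1

end HasSpecData

section Crossing

variable {X Y : Type*} [ConditionallyCompleteLinearOrder X] [DenselyOrdered X]
  [TopologicalSpace X] [OrderTopology X] [LinearOrder Y] [DenselyOrdered Y] [TopologicalSpace Y]
  [OrderClosedTopology Y] {g : X → Y} {a b : X}

theorem exists_eventually_le_frequently_ge_of_lt (hab : a ≤ b)
    (hg : ContinuousOn g (Icc a b)) (hgab : g a < g b) :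
    ∃ c ∈ Ioo a b, (∀ᶠ x in 𝓝[<] c, g x ≤ g c) ∧ ∃ᶠ x in 𝓝[>] c, g c ≤ g x := by
  obtain ⟨k, hak, hkb⟩ := exists_between hgab
  let S : Set X := {x ∈ Icc a b | k < g x}
  have hbS : b ∈ S := ⟨right_mem_Icc.2 hab, hkb⟩
  have hbdd : BddBelow S := ⟨a, fun x hx => hx.1.1⟩
  obtain ⟨c, hc⟩ : ∃ c, IsGLB S c := ⟨sInf S, isGLB_csInf ⟨b, hbS⟩ hbdd⟩
  have hcab : c ∈ Icc a b := ⟨hc.2 fun x hx => hx.1.1, hc.1 hbS⟩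
  have hleft : ∀ x ∈ Ico a c, g x ≤ k := fun x hx =>
    not_lt.1 fun hkx => hx.2.not_ge (hc.1 ⟨⟨hx.1, hx.2.le.trans hcab.2⟩, hkx⟩)
  have hkc : k ≤ g c := by
    have hclosed : IsClosed {x ∈ Icc a b | k ≤ g x} :=
      isClosed_Icc.isClosed_le continuousOn_const hg
    have hsub : S ⊆ {x ∈ Icc a b | k ≤ g x} := fun x hx => ⟨hx.1, hx.2.le⟩
    exact (closure_minimal hsub hclosed (hc.mem_closure ⟨b, hbS⟩)).2
  have hac : a < c := hcab.1.lt_of_ne fun h => (h ▸ hak).not_ge hkc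
  have hck : g c ≤ k := by
    have hclosed : IsClosed {x ∈ Icc a b | g x ≤ k} :=
      isClosed_Icc.isClosed_le hg continuousOn_const
    have hsub : Ico a c ⊆ {x ∈ Icc a b | g x ≤ k} := fun x hx =>
      ⟨⟨hx.1, hx.2.le.trans hcab.2⟩, hleft x hx⟩
    have hmem : c ∈ closure (Ico a c) := closure_Ico hac.ne ▸ right_mem_Icc.2 hac.le
    exact (closure_minimal hsub hclosed hmem).2
  have hcb : c < b := hcab.2.lt_of_ne fun h => (h ▸ hkb).not_ge hck
  refine ⟨c, ⟨hac, hcb⟩, ?_, ?_⟩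
  · filter_upwards [Ico_mem_nhdsLT hac] with x hx using (hleft x hx).trans hkc
  · have hS : ∀ x ∈ S, g c ≤ g x ∧ c < x := fun x hx =>
      ⟨hck.trans hx.2.le, (hc.1 hx).lt_of_ne fun h => (h ▸ hx.2).not_ge hck⟩
    exact frequently_nhdsWithin_iff.2 ((hc.frequently_nhds_mem ⟨b, hbS⟩).mono hS)

theorem exists_eventually_le_frequently_ge (hab : a < b)
    (hg : ContinuousOn g (Icc a b)) (hgab : g a ≤ g b) :
    ∃ c ∈ Ioo a b, (∀ᶠ x in 𝓝[<] c, g x ≤ g c) ∧ ∃ᶠ x in 𝓝[>] c, g c ≤ g x := by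
  by_cases hanti : AntitoneOn g (Icc a b)
  · have hconst : ∀ x ∈ Icc a b, g x = g a := fun x hx =>
      (hanti (left_mem_Icc.2 hab.le) hx hx.1).antisymm
        (hgab.trans (hanti hx (right_mem_Icc.2 hab.le) hx.2))
    obtain ⟨c, hac, hcb⟩ := exists_between hab
    have : (𝓝[>] c).NeBot := nhdsGT_neBot_of_exists_gt ⟨b, hcb⟩
    have hgc : ∀ᶠ x in 𝓝 c, g x = g c := by
      filter_upwards [Icc_mem_nhds hac hcb] with x hx
      rw [hconst x hx, hconst c ⟨hac.le, hcb.le⟩]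
    exact ⟨c, ⟨hac, hcb⟩, (hgc.filter_mono nhdsWithin_le_nhds).mono fun x => le_of_eq,
      ((hgc.filter_mono nhdsWithin_le_nhds).mono fun x => ge_of_eq).frequently⟩
  · obtain ⟨x, hx, y, hy, hxy, hgxy⟩ : ∃ x ∈ Icc a b, ∃ y ∈ Icc a b, x ≤ y ∧ g x < g y := by
      simpa only [AntitoneOn, not_forall, not_le, exists_prop] using hanti
    obtain ⟨c, hc, hcg⟩ := exists_eventually_le_frequently_ge_of_lt hxy
      (hg.mono (Icc_subset_Icc hx.1 hy.2)) hgxy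
    exact ⟨c, Ioo_subset_Ioo hx.1 hy.2 hc, hcg⟩

end Crossing

section QuasiMeanValue

variable {f : ℝ → ℝ} {a b m : ℝ}

theorem exists_hasSpecData_ge (hab : a < b) (hcont : ContinuousOn f (Icc a b))
    (hspec : ∀ x ∈ Ioo a b, SpecDifferentiableAt f x) (hm : m * (b - a) ≤ f b - f a) :
    ∃ c ∈ Ioo a b, ∃ L α β, HasSpecData f c L α β ∧ m ≤ α ∧ m ≤ β := by
  have hg : ContinuousOn (fun x => f x - m * x) (Icc a b) := hcont.sub (by fun_prop)
  obtain ⟨c, hc, hleft, hright⟩ :=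
    exists_eventually_le_frequently_ge hab hg (by linarith)
  obtain ⟨L, α, β, hd⟩ := hspec c hc
  obtain rfl : L = f c := hd.eq_of_continuousAt (hcont.continuousAt (Icc_mem_nhds hc.1 hc.2))
  exact ⟨c, hc, f c, α, β, hd, hd.le_right (hright.mono fun x hx => by linarith),
    hd.le_left (hleft.frequently.mono fun x hx => by linarith)⟩

theorem exists_hasSpecData_le (hab : a < b) (hcont : ContinuousOn f (Icc a b))
    (hspec : ∀ x ∈ Ioo a b, SpecDifferentiableAt f x) (hm : f b - f a ≤ m * (b - a)) :
    ∃ c ∈ Ioo a b, ∃ L α β, HasSpecData f c L α β ∧ α ≤ m ∧ β ≤ m := by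
  have hspec_neg : ∀ x ∈ Ioo a b, SpecDifferentiableAt (-f) x := fun x hx =>
    let ⟨_, _, _, hd⟩ := hspec x hx
    ⟨_, _, _, hd.neg⟩
  obtain ⟨c, hc, L, α, β, hd, hα, hβ⟩ := exists_hasSpecData_ge (m := -m) hab hcont.neg hspec_neg
    (by simp only [Pi.neg_apply]; linarith)
  exact ⟨c, hc, -L, -α, -β, neg_neg f ▸ hd.neg, neg_le.1 hα, neg_le.1 hβ⟩

end QuasiMeanValue

theorem quasi_mean_value (f : ℝ → ℝ) (a b : ℝ) (hab : a < b)
    (hcont : ContinuousOn f (Set.Icc a b))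
    (hspec : ∀ x ∈ Set.Ioo a b, SpecDifferentiableAt f x) :
    ∃ c₁ ∈ Set.Ioo a b, ∃ c₂ ∈ Set.Ioo a b, ∃ d₁ d₂,
      HasSpecDerivAt f c₁ d₁ ∧ HasSpecDerivAt f c₂ d₂ ∧
        d₂ ≤ (f b - f a) / (b - a) ∧ (f b - f a) / (b - a) ≤ d₁ := by
  have hslope : (f b - f a) / (b - a) * (b - a) = f b - f a :=
    div_mul_cancel₀ _ (sub_pos.2 hab).ne'
  obtain ⟨c₁, hc₁, L₁, α₁, β₁, hd₁, hα₁, hβ₁⟩ := exists_hasSpecData_ge hab hcont hspec hslope.le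
  obtain ⟨c₂, hc₂, L₂, α₂, β₂, hd₂, hα₂, hβ₂⟩ := exists_hasSpecData_le hab hcont hspec hslope.ge
  exact ⟨c₁, hc₁, c₂, hc₂, specA α₁ β₁, specA α₂ β₂, ⟨L₁, α₁, β₁, hd₁, rfl⟩,
    ⟨L₂, α₂, β₂, hd₂, rfl⟩, specA_le hα₂ hβ₂, le_specA hα₁ hβ₁⟩
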